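/- If for ν-almost every x ∈ Σ the lower local dimension of ν at x is strictly greater than h_X, then ν is Q-regular. In particular this holds if the lower Hausdorff dimension dim̲_H(ν) > h_X. -/

import Mathlib

open MeasureTheory ProbabilityTheory Filter Set
open scoped ENNReal

noncomputable section

/-- The one-sided symbolic space over the alphabet `{0, …, b-1}`. -/
abbrev SymbSpace (b : ℕ) : Type := ℕ → Fin b

/-- The cylinder `[w]` of sequences starting with the finite word `w`. -/
def cylinder {b : ℕ} (w : List (Fin b)) : Set (SymbSpace b) :=
  {x | ∀ i : Fin w.length, x i = w.get i}

/-- The prefix `x|_n` of `x` of length `n`, as a finite word. -/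
def wordPrefix {b : ℕ} (x : SymbSpace b) (n : ℕ) : List (Fin b) :=
  List.ofFn (fun i : Fin n => x i)

/-- `Y_w = X_{w_1} X_{w_1w_2} ⋯ X_{w_1⋯w_n}`. -/
def cascadeY {b : ℕ} {Ω : Type*} (X : List (Fin b) → Ω → ℝ) (w : List (Fin b)) (ω : Ω) : ℝ :=
  ∏ k ∈ Finset.range w.length, X (w.take (k + 1)) ω

/-- The total mass `Z_n = ∑_{|u| = n} Y_u ν([u])`. -/
def cascadeZ {b : ℕ} {Ω : Type*} (X : List (Fin b) → Ω → ℝ) (ν : Measure (SymbSpace b))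
    (n : ℕ) (ω : Ω) : ℝ :=
  ∑ u : Fin n → Fin b, cascadeY X (List.ofFn u) ω * (ν (cylinder (List.ofFn u))).toReal

/-- `Z = limsup_n Z_n`. -/
def cascadeZlim {b : ℕ} {Ω : Type*} (X : List (Fin b) → Ω → ℝ) (ν : Measure (SymbSpace b))
    (ω : Ω) : ℝ :=
  Filter.limsup (fun n => cascadeZ X ν n ω) atTop

/-- Assumption (M1): the weights `X_u`, `u` a nonempty finite word, are i.i.d. with common
law that of the nonnegative random variable `X₀` of expectation 1. -/
structure CascadeM1 {b : ℕ} {Ω : Type*} [MeasurableSpace Ω] (P : Measure Ω)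
    (X : List (Fin b) → Ω → ℝ) (X₀ : Ω → ℝ) : Prop where
  meas : ∀ w, Measurable (X w)
  nonneg : ∀ w ω, 0 ≤ X w ω
  meas₀ : Measurable X₀
  nonneg₀ : ∀ ω, 0 ≤ X₀ ω
  mean₀ : ∫ ω, X₀ ω ∂P = 1
  indep : iIndepFun
    (fun w : {w : List (Fin b) // w ≠ []} => X w.1) P
  ident : ∀ w : List (Fin b), w ≠ [] → IdentDistrib (X w) X₀ P P

/-- `h_X = E(X log X) ∈ [0, ∞]` (well defined since `x log x ≥ -e⁻¹` and, by convexity,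
`E(X log X) ≥ E(X) log E(X) = 0`), encoded as an extended nonnegative real. -/
def entropyX {Ω : Type*} [MeasurableSpace Ω] (P : Measure Ω) (X₀ : Ω → ℝ) : ℝ≥0∞ :=
  (∫⁻ ω, ENNReal.ofReal (X₀ ω * Real.log (X₀ ω)) ∂P) -
    (∫⁻ ω, ENNReal.ofReal (-(X₀ ω * Real.log (X₀ ω))) ∂P)

/-- The lower local dimension `liminf_n (-log ν([x|_n]) / n)` of `ν` at `x`, valued
in `[0, ∞]`. -/
def lowerLocalDim {b : ℕ} (ν : Measure (SymbSpace b)) (x : SymbSpace b) : ℝ≥0∞ :=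
  Filter.liminf
    (fun n : ℕ => ENNReal.ofReal (-Real.log ((ν (cylinder (wordPrefix x n))).toReal) / n))
    atTop

/-- The upper local dimension `limsup_n (-log ν([x|_n]) / n)` of `ν` at `x`. -/
def upperLocalDim {b : ℕ} (ν : Measure (SymbSpace b)) (x : SymbSpace b) : ℝ≥0∞ :=
  Filter.limsup
    (fun n : ℕ => ENNReal.ofReal (-Real.log ((ν (cylinder (wordPrefix x n))).toReal) / n))
    atTop

/-- The lower Hausdorff dimension of `ν`: the `ν`-essential infimum of the lower local
dimension. -/
def lowerHausdorffDim {b : ℕ} (ν : Measure (SymbSpace b)) : ℝ≥0∞ :=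
  essInf (lowerLocalDim ν) ν

/-- The upper Hausdorff dimension of `ν`: the `ν`-essential supremum of the lower local
dimension. -/
def upperHausdorffDim {b : ℕ} (ν : Measure (SymbSpace b)) : ℝ≥0∞ :=
  essSup (lowerLocalDim ν) ν

/-- The upper packing dimension of `ν`: the `ν`-essential supremum of the upper local
dimension. -/
def upperPackingDim {b : ℕ} (ν : Measure (SymbSpace b)) : ℝ≥0∞ :=
  essSup (upperLocalDim ν) ν



theorem pi_withDensity_aux {n : ℕ} (μ : Measure ℝ) [IsProbabilityMeasure μ]
    (f : ℝ → ℝ≥0∞) (hf : Measurable f) [IsProbabilityMeasure (μ.withDensity f)] :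
    Measure.pi (fun _ : Fin n => μ.withDensity f) =
      (Measure.pi (fun _ : Fin n => μ)).withDensity (fun z => ∏ i, f (z i)) := by
  symm
  apply Eq.symm
  apply Measure.pi_eq
  intro s hs
  rw [withDensity_apply _ (MeasurableSet.univ_pi hs),
    ← lintegral_indicator (MeasurableSet.univ_pi hs)]
  have hind : iIndepFun (fun (i : Fin n) (z : Fin n → ℝ) => (s i).indicator f (z i))
      (Measure.pi (fun _ : Fin n => μ)) :=
    iIndepFun_pi (X := fun i => (s i).indicator f)
      (fun i => (hf.indicator (hs i)).aemeasurable)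
  have h1 : ∀ z : Fin n → ℝ, (univ.pi s).indicator (fun z => ∏ i, f (z i)) z
      = ∏ i, (s i).indicator f (z i) := by
    intro z
    by_cases hz : z ∈ univ.pi s
    · rw [indicator_of_mem hz]
      refine Finset.prod_congr rfl fun i _ => ?_
      rw [indicator_of_mem (hz i (mem_univ i))]
    · rw [indicator_of_notMem hz]
      simp only [mem_univ_pi, not_forall] at hz
      obtain ⟨i, hi⟩ := hz
      exact (Finset.prod_eq_zero (Finset.mem_univ i) (indicator_of_notMem hi _)).symm
  simp_rw [h1]
  rw [lintegral_prod_eq_prod_lintegral_of_indepFun _ _ hind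
    (fun i => (hf.indicator (hs i)).comp (measurable_pi_apply i))]
  refine Finset.prod_congr rfl fun i _ => ?_
  rw [withDensity_apply _ (hs i), ← lintegral_indicator (hs i)]
  have := (measurePreserving_eval (fun _ : Fin n => μ) i)
  rw [← this.lintegral_comp (hf.indicator (hs i))]

/-- Finite-dimensional change of measure. -/
theorem tilt_aux {n : ℕ} {Ω : Type*} [MeasurableSpace Ω] (P : Measure Ω) [IsProbabilityMeasure P]
    (ρ₀ : Measure ℝ) [IsProbabilityMeasure ρ₀]
    [IsProbabilityMeasure (ρ₀.withDensity ENNReal.ofReal)]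
    (T : Fin n → Ω → ℝ) (hT : ∀ i, Measurable (T i)) (hind : iIndepFun T P)
    (hlaw : ∀ i, P.map (T i) = ρ₀) (B : Set (Fin n → ℝ)) (hB : MeasurableSet B) :
    ∫⁻ ω, (∏ i, ENNReal.ofReal (T i ω)) * B.indicator 1 (fun i => T i ω) ∂P =
      Measure.infinitePi (fun _ : ℕ => ρ₀.withDensity ENNReal.ofReal)
        {x | (fun i : Fin n => x i) ∈ B} := by
  have hmap := (iIndepFun_iff_map_fun_eq_pi_map (fun i => (hT i).aemeasurable)).1 hind
  simp_rw [hlaw] at hmap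
  set G : (Fin n → ℝ) → ℝ≥0∞ := fun z => ∏ i, ENNReal.ofReal (z i) with hG
  have hGm : Measurable G := by fun_prop
  have h1 : ∫⁻ ω, (∏ i, ENNReal.ofReal (T i ω)) * B.indicator 1 (fun i => T i ω) ∂P
      = ∫⁻ z, G z * B.indicator 1 z ∂(Measure.pi (fun _ : Fin n => ρ₀)) := by
    rw [← hmap, lintegral_map]
    · exact hGm.mul (measurable_one.indicator hB)
    · fun_prop
  have h2 : ∫⁻ z, G z * B.indicator 1 z ∂(Measure.pi (fun _ : Fin n => ρ₀))
      = (Measure.pi (fun _ : Fin n => ρ₀.withDensity ENNReal.ofReal)) B := by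
    rw [pi_withDensity_aux ρ₀ _ ENNReal.measurable_ofReal, withDensity_apply _ hB,
      ← lintegral_indicator hB]
    refine lintegral_congr fun z => ?_
    by_cases hz : z ∈ B <;> simp [hz, hG]
  rw [h1, h2]
  have hind2 : iIndepFun (fun (i : ℕ) (x : ℕ → ℝ) => x i)
      (Measure.infinitePi (fun _ : ℕ => ρ₀.withDensity ENNReal.ofReal)) :=
    iIndepFun_infinitePi (X := fun _ x => x) (by fun_prop)
  have hind3 := hind2.precomp (g := fun i : Fin n => (i : ℕ)) Fin.val_injective
  have hmap3 := (iIndepFun_iff_map_fun_eq_pi_map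
    (fun i => (measurable_pi_apply _).aemeasurable)).1 hind3
  simp only [Measure.infinitePi_map_eval] at hmap3
  rw [← hmap3, Measure.map_apply (by fun_prop) hB]
  rfl

theorem slln_aux (ρ : Measure ℝ) [IsProbabilityMeasure ρ] (hint : Integrable Real.log ρ)
    (a : ℝ) (ha : ∫ x, Real.log x ∂ρ < a) (ε : ℝ≥0∞) (hε : 0 < ε) :
    ∃ M : ℝ, 0 < M ∧ Measure.infinitePi (fun _ : ℕ => ρ)
      {x | ∃ k : ℕ, M * Real.exp (k * a) < ∏ i ∈ Finset.range k, x i} ≤ ε := by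
  set μ := Measure.infinitePi (fun _ : ℕ => ρ) with hμ
  have hev : ∀ i : ℕ, MeasurePreserving (fun x : ℕ → ℝ => x i) μ ρ :=
    fun i => measurePreserving_eval_infinitePi (fun _ : ℕ => ρ) i
  have hind : iIndepFun (fun (i : ℕ) (x : ℕ → ℝ) => Real.log (x i)) μ :=
    iIndepFun_infinitePi (X := fun _ x => Real.log x) (fun _ => Real.measurable_log)
  have hsl := strong_law_ae_real (μ := μ) (fun (i : ℕ) (x : ℕ → ℝ) => Real.log (x i))
    ((hev 0).integrable_comp_of_integrable hint)
    (fun i j hij => hind.indepFun hij)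
    (fun i => by
      refine ⟨(Real.measurable_log.comp (measurable_pi_apply i)).aemeasurable,
        (Real.measurable_log.comp (measurable_pi_apply 0)).aemeasurable, ?_⟩
      have : ∀ i : ℕ, μ.map (fun x : ℕ → ℝ => Real.log (x i)) = ρ.map Real.log := by
        intro i
        rw [← (hev i).map_eq, Measure.map_map Real.measurable_log (by fun_prop)]
        rfl
      rw [this i, this 0])
  have hmean : ∫ x, Real.log (x 0) ∂μ = ∫ x, Real.log x ∂ρ := by
    rw [← (hev 0).map_eq, integral_map (measurable_pi_apply 0).aemeasurable
      (Real.measurable_log.aestronglyMeasurable)]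
  rw [hmean] at hsl
  set S : ℕ → Set (ℕ → ℝ) := fun M =>
    {x | ∃ k : ℕ, ((M : ℝ) + 1) * Real.exp (k * a) < ∏ i ∈ Finset.range k, x i} with hS
  have hSm : ∀ M, MeasurableSet (S M) := by
    intro M
    have : S M = ⋃ k : ℕ, {x | ((M : ℝ) + 1) * Real.exp (k * a) < ∏ i ∈ Finset.range k, x i} := by
      ext x; simp [hS]
    rw [this]
    refine MeasurableSet.iUnion fun k => ?_
    exact measurableSet_lt measurable_const (by fun_prop)
  have hanti : Antitone S := by
    intro M N hMN x hx
    obtain ⟨k, hk⟩ := hx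
    refine ⟨k, lt_of_le_of_lt ?_ hk⟩
    have : (M : ℝ) ≤ N := by exact_mod_cast hMN
    gcongr
  have hzero : μ (⋂ M, S M) = 0 := by
    rw [measure_eq_zero_iff_ae_notMem]
    filter_upwards [hsl] with x hx hmem
    have hev1 : ∀ᶠ k : ℕ in atTop,
        (∏ i ∈ Finset.range k, x i) / Real.exp (k * a) ≤ 1 := by
      filter_upwards [hx.eventually_lt_const ha, eventually_gt_atTop 0] with k hk hk0
      rw [div_le_one (Real.exp_pos _)]
      by_contra! hcon
      have hpos : 0 < ∏ i ∈ Finset.range k, x i := (Real.exp_pos _).trans hcon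
      have hne : ∀ i ∈ Finset.range k, x i ≠ 0 := Finset.prod_ne_zero_iff.1 hpos.ne'
      have := Real.log_lt_log (Real.exp_pos _) hcon
      rw [Real.log_exp, Real.log_prod hne] at this
      rw [div_lt_iff₀ (by exact_mod_cast hk0)] at hk
      linarith
    obtain ⟨C, hC⟩ := (IsBoundedUnder.bddAbove_range
      (f := fun k : ℕ => (∏ i ∈ Finset.range k, x i) / Real.exp (k * a)) ⟨1, by simpa using hev1⟩)
    obtain ⟨M, hM⟩ := exists_nat_ge C
    obtain ⟨k, hk⟩ := mem_iInter.1 hmem M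
    have h1 := hC (mem_range_self k)
    rw [div_le_iff₀ (Real.exp_pos _)] at h1
    have : C * Real.exp (k * a) ≤ ((M : ℝ) + 1) * Real.exp (k * a) := by
      gcongr; linarith
    linarith
  have htend := tendsto_measure_iInter_atTop (μ := μ) (fun M => (hSm M).nullMeasurableSet) hanti
    ⟨0, measure_ne_top _ _⟩
  rw [hzero] at htend
  obtain ⟨M, hM⟩ := (htend.eventually (ge_mem_nhds hε)).exists
  exact ⟨M + 1, by positivity, hM⟩

/-- The nonempty prefixes of a word. -/
def pre {b : ℕ} (u : List (Fin b)) : Finset (List (Fin b)) :=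
  (Finset.range u.length).image (fun k => u.take (k + 1))

theorem mem_pre {b : ℕ} {u w : List (Fin b)} :
    w ∈ pre u ↔ ∃ k < u.length, u.take (k + 1) = w := by
  simp [pre]

theorem nil_notMem_pre {b : ℕ} (u : List (Fin b)) : [] ∉ pre u := by
  rw [mem_pre]
  rintro ⟨k, hk, h⟩
  have := congrArg List.length h
  simp at this
  simp [this] at hk

theorem take_inj {b : ℕ} {u v : List (Fin b)} {i j : ℕ} (hi : i ≤ u.length) (hj : j ≤ v.length)
    (h : u.take i = v.take j) : i = j := by
  have := congrArg List.length h
  simpa [hi, hj] using this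

theorem prod_pre {b : ℕ} {α : Type*} [CommMonoid α] (u : List (Fin b)) (f : List (Fin b) → α) :
    ∏ w ∈ pre u, f w = ∏ k ∈ Finset.range u.length, f (u.take (k + 1)) := by
  rw [pre, Finset.prod_image]
  intro i hi j hj h
  simp only [Finset.coe_range, mem_Iio] at hi hj
  have := take_inj (by omega) (by omega) h
  omega

theorem pre_inter {b : ℕ} (u v : List (Fin b)) (huv : u.length = v.length) :
    ∃ k ≤ u.length, u.take k = v.take k ∧ pre u ∩ pre v = pre (u.take k) := by
  set k := Nat.findGreatest (fun k => u.take k = v.take k) u.length with hk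
  have hku : k ≤ u.length := Nat.findGreatest_le _
  have hkp : u.take k = v.take k :=
    Nat.findGreatest_spec (P := fun k => u.take k = v.take k) (m := 0) (Nat.zero_le _) (by simp)
  refine ⟨k, hku, hkp, ?_⟩
  ext w
  simp only [Finset.mem_inter, mem_pre]
  constructor
  · rintro ⟨⟨i, hi, rfl⟩, j, hj, h⟩
    have hij := take_inj (by omega) (by omega) h
    have hij : j = i := by omega
    subst hij
    have : j + 1 ≤ k := Nat.le_findGreatest (P := fun k => u.take k = v.take k) (by omega) h.symm
    refine ⟨j, by simp; omega, ?_⟩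
    rw [List.take_take, min_eq_left this]
  · rintro ⟨i, hi, rfl⟩
    simp only [List.length_take, lt_min_iff] at hi
    refine ⟨⟨i, hi.2, ?_⟩, i, by omega, ?_⟩
    · rw [List.take_take, min_eq_left (by omega)]
    · rw [hkp, List.take_take, min_eq_left (by omega)]

set_option linter.unusedSectionVars false

section cascade
variable {b : ℕ} {Ω : Type*} [MeasurableSpace Ω] {P : Measure Ω} [IsProbabilityMeasure P]
  {X : List (Fin b) → Ω → ℝ} {X₀ : Ω → ℝ}

theorem cascadeY_nonneg (hM1 : CascadeM1 P X X₀) (u : List (Fin b)) (ω : Ω) :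
    0 ≤ cascadeY X u ω := Finset.prod_nonneg fun _ _ => hM1.nonneg _ _

theorem measurable_cascadeY (hM1 : CascadeM1 P X X₀) (u : List (Fin b)) :
    Measurable (cascadeY X u) := by
  unfold cascadeY
  exact Finset.measurable_prod _ fun _ _ => hM1.meas _

theorem cascadeY_ofReal (hM1 : CascadeM1 P X X₀) (u : List (Fin b)) (ω : Ω) :
    ENNReal.ofReal (cascadeY X u ω) = ∏ w ∈ pre u, ENNReal.ofReal (X w ω) := by
  rw [prod_pre, cascadeY, ENNReal.ofReal_prod_of_nonneg fun _ _ => hM1.nonneg _ _]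

theorem integrable_X₀ (hM1 : CascadeM1 P X X₀) : Integrable X₀ P := by
  by_contra h
  have := hM1.mean₀
  rw [integral_undef h] at this
  simp at this

theorem lintegral_X₀ (hM1 : CascadeM1 P X X₀) : ∫⁻ ω, ENNReal.ofReal (X₀ ω) ∂P = 1 := by
  rw [← ofReal_integral_eq_lintegral_ofReal (integrable_X₀ hM1) (ae_of_all _ hM1.nonneg₀),
    hM1.mean₀, ENNReal.ofReal_one]

theorem lintegral_prod_X (hM1 : CascadeM1 P X X₀) (S : Finset (List (Fin b))) (hS : [] ∉ S) :
    ∫⁻ ω, ∏ w ∈ S, ENNReal.ofReal (X w ω) ∂P = 1 := by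
  have hind : iIndepFun (fun (w : S) ω => X w.1 ω) P :=
    hM1.indep.precomp (g := fun w : S => ⟨w.1, fun h => hS (h ▸ w.2)⟩)
      (fun x y hxy => Subtype.ext (by simpa using hxy))
  have hind2 : iIndepFun (fun (w : S) ω => ENNReal.ofReal (X w.1 ω)) P :=
    hind.comp (fun _ => ENNReal.ofReal) (fun _ => ENNReal.measurable_ofReal)
  have := lintegral_prod_eq_prod_lintegral_of_indepFun Finset.univ _ hind2
    (fun i => ENNReal.measurable_ofReal.comp (hM1.meas _))
  have h2 : ∀ ω, ∏ w ∈ S, ENNReal.ofReal (X w ω) = ∏ w : S, ENNReal.ofReal (X w.1 ω) :=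
    fun ω => (Finset.prod_coe_sort S (fun w => ENNReal.ofReal (X w ω))).symm
  simp_rw [h2]
  rw [this]
  refine Finset.prod_eq_one fun w _ => ?_
  rw [← lintegral_X₀ hM1]
  exact ((hM1.ident w.1 (fun h => hS (h ▸ w.2))).comp ENNReal.measurable_ofReal).lintegral_eq

/-- The event that the cascade stays below an exponential barrier along `u`. -/
def goodSet (X : List (Fin b) → Ω → ℝ) (M a : ℝ) (u : List (Fin b)) : Set Ω :=
  {ω | ∀ k ≤ u.length, cascadeY X (u.take k) ω ≤ M * Real.exp (k * a)}

theorem measurableSet_goodSet (hM1 : CascadeM1 P X X₀) (M a : ℝ) (u : List (Fin b)) :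
    MeasurableSet (goodSet X M a u) := by
  have : goodSet X M a u = ⋂ k : ℕ, ⋂ _ : k ≤ u.length,
      {ω | cascadeY X (u.take k) ω ≤ M * Real.exp (k * a)} := by
    ext; simp [goodSet]
  rw [this]
  exact MeasurableSet.iInter fun k => MeasurableSet.iInter fun _ =>
    measurableSet_le (measurable_cascadeY hM1 _) measurable_const

theorem second_moment (hM1 : CascadeM1 P X X₀) (M a : ℝ) (u v : List (Fin b))
    (huv : u.length = v.length) :
    ∫⁻ ω, (ENNReal.ofReal (cascadeY X u ω) * (goodSet X M a u).indicator 1 ω) *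
        (ENNReal.ofReal (cascadeY X v ω) * (goodSet X M a v).indicator 1 ω) ∂P ≤
      ∑ k ∈ Finset.range (u.length + 1),
        if u.take k = v.take k then ENNReal.ofReal (M * Real.exp (k * a)) else 0 := by
  obtain ⟨k, hk, hkp, hpre⟩ := pre_inter u v huv
  have h1 : ∀ ω, (ENNReal.ofReal (cascadeY X u ω) * (goodSet X M a u).indicator 1 ω) *
        (ENNReal.ofReal (cascadeY X v ω) * (goodSet X M a v).indicator 1 ω) ≤
      ENNReal.ofReal (M * Real.exp (k * a)) * ∏ w ∈ pre u ∪ pre v, ENNReal.ofReal (X w ω) := by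
    intro ω
    by_cases hg : ω ∈ goodSet X M a u
    · have h2 : (goodSet X M a v).indicator (1 : Ω → ℝ≥0∞) ω ≤ 1 :=
        indicator_le_self' (by simp) ω
      calc _ ≤ (ENNReal.ofReal (cascadeY X u ω) * 1) * (ENNReal.ofReal (cascadeY X v ω) * 1) := by
              rw [indicator_of_mem hg]; gcongr; simp
        _ = ENNReal.ofReal (cascadeY X (u.take k) ω) *
              ∏ w ∈ pre u ∪ pre v, ENNReal.ofReal (X w ω) := by
            rw [mul_one, mul_one, cascadeY_ofReal hM1, cascadeY_ofReal hM1, cascadeY_ofReal hM1,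
              ← hpre, mul_comm (∏ w ∈ pre u ∩ pre v, _), Finset.prod_union_inter]
        _ ≤ _ := by
            gcongr
            exact hg k hk
    · simp [indicator_of_notMem hg]
  have hmeas : Measurable fun ω => ∏ w ∈ pre u ∪ pre v, ENNReal.ofReal (X w ω) :=
    Finset.measurable_prod _ fun w _ => ENNReal.measurable_ofReal.comp (hM1.meas w)
  calc _ ≤ ∫⁻ ω, ENNReal.ofReal (M * Real.exp (k * a)) *
            ∏ w ∈ pre u ∪ pre v, ENNReal.ofReal (X w ω) ∂P := lintegral_mono h1
    _ = ENNReal.ofReal (M * Real.exp (k * a)) := by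
        rw [lintegral_const_mul _ hmeas, lintegral_prod_X hM1, mul_one]
        simp [nil_notMem_pre]
    _ = if u.take k = v.take k then ENNReal.ofReal (M * Real.exp (k * a)) else 0 := by
        rw [if_pos hkp]
    _ ≤ _ := Finset.single_le_sum (f := fun k : ℕ => if u.take k = v.take k then
        ENNReal.ofReal (M * Real.exp (k * a)) else 0) (fun _ _ => zero_le)
        (Finset.mem_range.2 (by omega))

/-- The size-biased law. -/
def sbLaw (P : Measure Ω) (X₀ : Ω → ℝ) : Measure ℝ := (P.map X₀).withDensity ENNReal.ofReal

theorem isProb_sbLaw (hM1 : CascadeM1 P X X₀) : IsProbabilityMeasure (sbLaw P X₀) := by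
  constructor
  rw [sbLaw, withDensity_apply _ MeasurableSet.univ, Measure.restrict_univ,
    lintegral_map ENNReal.measurable_ofReal hM1.meas₀, lintegral_X₀ hM1]

theorem first_moment (hM1 : CascadeM1 P X X₀) (M a : ℝ) (u : List (Fin b)) :
    ∫⁻ ω, ENNReal.ofReal (cascadeY X u ω) * (goodSet X M a u)ᶜ.indicator 1 ω ∂P ≤
      Measure.infinitePi (fun _ : ℕ => sbLaw P X₀)
        {x | ∃ k : ℕ, M * Real.exp (k * a) < ∏ i ∈ Finset.range k, x i} := by
  have := isProb_sbLaw hM1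
  have hp : IsProbabilityMeasure (P.map X₀) := Measure.isProbabilityMeasure_map hM1.meas₀.aemeasurable
  have hne : ∀ i : Fin u.length, u.take (i + 1) ≠ [] := fun i h =>
    nil_notMem_pre u (mem_pre.2 ⟨i, i.2, h⟩)
  have hind : iIndepFun (fun (i : Fin u.length) ω => X (u.take (i + 1)) ω) P :=
    hM1.indep.precomp (g := fun i : Fin u.length => ⟨u.take (i + 1), hne i⟩)
      (fun i j hij => by
        have := take_inj (by omega) (by omega) (congrArg Subtype.val hij)
        exact Fin.ext (by omega))
  set B : Set (Fin u.length → ℝ) := ⋃ k : Fin (u.length + 1),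
    {z | M * Real.exp (k * a) < ∏ i ∈ Finset.range k, if h : i < u.length then z ⟨i, h⟩ else 0}
    with hB
  have hBm : MeasurableSet B := by
    refine MeasurableSet.iUnion fun k => measurableSet_lt measurable_const ?_
    refine Finset.measurable_prod _ fun i _ => ?_
    split_ifs <;> fun_prop
  have hp2 : IsProbabilityMeasure ((P.map X₀).withDensity ENNReal.ofReal) := this
  have key := tilt_aux P (P.map X₀) (fun (i : Fin u.length) ω => X (u.take (i + 1)) ω)
    (fun i => hM1.meas _) hind (fun i => (hM1.ident _ (hne i)).map_eq) B hBm
  calc _ ≤ ∫⁻ ω, (∏ i : Fin u.length, ENNReal.ofReal (X (u.take (i + 1)) ω)) *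
        B.indicator 1 (fun i : Fin u.length => X (u.take (i + 1)) ω) ∂P := by
        refine lintegral_mono fun ω => ?_
        have e1 : ENNReal.ofReal (cascadeY X u ω) =
            ∏ i : Fin u.length, ENNReal.ofReal (X (u.take (i + 1)) ω) := by
          rw [cascadeY_ofReal hM1, prod_pre, Finset.prod_range]
        rw [e1]
        gcongr
        by_cases hg : ω ∈ goodSet X M a u
        · simp [hg]
        · rw [indicator_of_mem (mem_compl hg), indicator_of_mem]
          · simp
          simp only [goodSet, mem_setOf_eq, not_forall, not_le] at hg
          obtain ⟨k, hk, hlt⟩ := hg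
          refine mem_iUnion.2 ⟨⟨k, by omega⟩, ?_⟩
          simp only [mem_setOf_eq]
          refine lt_of_lt_of_eq hlt ?_
          rw [cascadeY, List.length_take, min_eq_left hk]
          refine Finset.prod_congr rfl fun i hi => ?_
          have hi := Finset.mem_range.1 hi
          rw [dif_pos (by omega), List.take_take, min_eq_left (by omega)]
    _ = _ := key
    _ ≤ _ := by
        refine measure_mono fun x hx => ?_
        obtain ⟨k, hk⟩ := mem_iUnion.1 hx
        refine ⟨k, lt_of_lt_of_eq hk ?_⟩
        refine Finset.prod_congr rfl fun i hi => ?_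
        have hi := Finset.mem_range.1 hi
        rw [dif_pos (by omega)]

end cascade

theorem unifInt_aux {Ω : Type*} [MeasurableSpace Ω] {P : Measure Ω} [IsProbabilityMeasure P]
    (f : ℕ → Ω → ℝ) (hf : ∀ n, Measurable (f n)) (hf0 : ∀ n ω, 0 ≤ f n ω)
    (H : ∀ ε : ℝ≥0∞, 0 < ε → ∃ D : ℝ≥0∞, D ≠ ∞ ∧ ∀ n, ∃ A R : Ω → ℝ≥0∞, Measurable A ∧
      Measurable R ∧ (∀ ω, ENNReal.ofReal (f n ω) ≤ A ω + R ω) ∧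
      ∫⁻ ω, A ω * A ω ∂P ≤ D ∧ ∫⁻ ω, R ω ∂P ≤ ε) :
    UniformIntegrable f 1 P := by
  have key : ∀ ε : ℝ, 0 < ε → ∃ d : ℝ, 0 ≤ d ∧ ∀ n (s : Set Ω), MeasurableSet s → ∀ K : ℝ, 0 < K →
      eLpNorm (s.indicator (f n)) 1 P ≤
        ENNReal.ofReal K * P s + ENNReal.ofReal (d / K) + ENNReal.ofReal ε := by
    intro ε hε
    obtain ⟨D, hD, h⟩ := H (ENNReal.ofReal ε) (ENNReal.ofReal_pos.2 hε)
    refine ⟨D.toReal, ENNReal.toReal_nonneg, fun n s hs K hK => ?_⟩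
    obtain ⟨A, R, hA, hR, hle, hA2, hRe⟩ := h n
    have hK0 : ENNReal.ofReal K ≠ 0 := (ENNReal.ofReal_pos.2 hK).ne'
    have hAle : ∀ ω, A ω ≤ ENNReal.ofReal K + A ω * A ω * (ENNReal.ofReal K)⁻¹ := by
      intro ω
      by_cases hc : A ω ≤ ENNReal.ofReal K
      · exact hc.trans le_self_add
      · push Not at hc
        refine le_trans ?_ le_add_self
        calc A ω = A ω * (ENNReal.ofReal K * (ENNReal.ofReal K)⁻¹) := by
              rw [ENNReal.mul_inv_cancel hK0 ENNReal.ofReal_ne_top, mul_one]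
          _ ≤ A ω * (A ω * (ENNReal.ofReal K)⁻¹) := by gcongr
          _ = _ := by rw [mul_assoc]
    rw [eLpNorm_indicator_eq_eLpNorm_restrict hs, eLpNorm_one_eq_lintegral_enorm]
    calc ∫⁻ ω in s, ‖f n ω‖ₑ ∂P ≤ ∫⁻ ω in s, (ENNReal.ofReal K +
            A ω * A ω * (ENNReal.ofReal K)⁻¹) + R ω ∂P := by
          refine lintegral_mono fun ω => ?_
          rw [Real.enorm_eq_ofReal (hf0 n ω)]
          exact (hle ω).trans (by gcongr; exact hAle ω)
      _ = ENNReal.ofReal K * P s + (∫⁻ ω in s, A ω * A ω ∂P) * (ENNReal.ofReal K)⁻¹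
            + ∫⁻ ω in s, R ω ∂P := by
          rw [lintegral_add_right _ hR, lintegral_add_left measurable_const,
            lintegral_mul_const _ (by fun_prop)]
          simp
      _ ≤ _ := by
          have e1 : ENNReal.ofReal (D.toReal / K) = D * (ENNReal.ofReal K)⁻¹ := by
            rw [ENNReal.ofReal_div_of_pos hK, ENNReal.ofReal_toReal hD, div_eq_mul_inv]
          rw [e1]
          gcongr
          · exact (setLIntegral_le_lintegral _ _).trans hA2
          · exact (setLIntegral_le_lintegral _ _).trans hRe
  refine ⟨fun n => (hf n).aestronglyMeasurable, ?_, ?_⟩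
  · intro ε hε
    obtain ⟨d, hd, h⟩ := key (ε / 3) (by positivity)
    set K := 3 * d / ε + 1 with hKdef
    have hK : 0 < K := by positivity
    refine ⟨ε / (3 * K), by positivity, fun n s hs hPs => (h n s hs K hK).trans ?_⟩
    have h1 : d / K ≤ ε / 3 := by
      rw [div_le_iff₀ hK, hKdef]
      have : ε / 3 * (3 * d / ε + 1) = d + ε / 3 := by field_simp
      rw [this]; linarith
    calc _ ≤ ENNReal.ofReal K * ENNReal.ofReal (ε / (3 * K)) + ENNReal.ofReal (ε / 3)
          + ENNReal.ofReal (ε / 3) := by gcongr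
      _ = ENNReal.ofReal (K * (ε / (3 * K)) + ε / 3 + ε / 3) := by
          rw [← ENNReal.ofReal_mul hK.le, ← ENNReal.ofReal_add (by positivity) (by positivity),
            ← ENNReal.ofReal_add (by positivity) (by positivity)]
      _ = ENNReal.ofReal ε := by congr 1; field_simp; ring
  · obtain ⟨d, hd, h⟩ := key 1 one_pos
    refine ⟨Real.toNNReal (1 + d / 1 + 1), fun n => ?_⟩
    have := h n univ MeasurableSet.univ 1 one_pos
    rw [indicator_univ, measure_univ, mul_one, ← ENNReal.ofReal_add (by positivity) (by positivity),
      ← ENNReal.ofReal_add (by positivity) (by positivity)] at this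
    exact this

theorem mem_cylinder_ofFn {b n : ℕ} (u : Fin n → Fin b) (x : SymbSpace b) :
    x ∈ cylinder (List.ofFn u) ↔ ∀ i : Fin n, x i = u i := by
  change (∀ i : Fin (List.ofFn u).length, x i = (List.ofFn u).get i) ↔ _
  simp only [List.get_ofFn]
  constructor
  · intro h i
    have := h (Fin.cast (by simp) i)
    simpa using this
  · intro h i
    have := h (Fin.cast (by simp) i)
    simpa using this

theorem wordPrefix_eq {b : ℕ} {l : List (Fin b)} {x : SymbSpace b} (hx : x ∈ cylinder l) {k : ℕ}
    (hk : k ≤ l.length) : wordPrefix x k = l.take k := by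
  apply List.ext_getElem
  · simp [wordPrefix, hk]
  · intro i h1 h2
    simp only [wordPrefix, List.length_ofFn] at h1
    have := hx ⟨i, by omega⟩
    simpa [wordPrefix] using this

theorem mem_cylinder_wordPrefix {b : ℕ} (x : SymbSpace b) (k : ℕ) :
    x ∈ cylinder (wordPrefix x k) := by
  rw [wordPrefix, mem_cylinder_ofFn]; simp

theorem measurableSet_cylinder_ofFn {b n : ℕ} (u : Fin n → Fin b) :
    MeasurableSet (cylinder (List.ofFn u)) := by
  have : cylinder (List.ofFn u) = ⋂ i : Fin n, (fun x : SymbSpace b => x i) ⁻¹' {u i} := by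
    ext x; simp [mem_cylinder_ofFn]
  rw [this]
  exact MeasurableSet.iInter fun i => measurable_pi_apply _ (measurableSet_singleton _)

theorem sum_cyl_le {b n : ℕ} (ν : Measure (SymbSpace b)) (F G : Set (SymbSpace b))
    (hF : MeasurableSet F) (S : Finset (Fin n → Fin b))
    (h : ∀ u ∈ S, F ∩ cylinder (List.ofFn u) ⊆ G) :
    ∑ u ∈ S, ν (F ∩ cylinder (List.ofFn u)) ≤ ν G := by
  rw [← measure_biUnion_finset]
  · exact measure_mono (iUnion₂_subset h)
  · intro u _ v _ huv
    refine disjoint_left.2 fun x hx hy => huv ?_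
    have h1 := (mem_cylinder_ofFn u x).1 hx.2
    have h2 := (mem_cylinder_ofFn v x).1 hy.2
    funext i
    rw [← h1 i, h2 i]
  · exact fun u _ => hF.inter (measurableSet_cylinder_ofFn u)

section cascade2
variable {b : ℕ} {Ω : Type*} [MeasurableSpace Ω] {P : Measure Ω} [IsProbabilityMeasure P]
  {X : List (Fin b) → Ω → ℝ} {X₀ : Ω → ℝ}

theorem decomp (hM1 : CascadeM1 P X X₀) (ν : Measure (SymbSpace b)) [IsProbabilityMeasure ν]
    (M a ε C : ℝ) (hM : 0 ≤ M) (E : Set (SymbSpace b)) (hEm : MeasurableSet E)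
    (hE : ∀ x ∈ E, ∀ k : ℕ,
      ν (cylinder (wordPrefix x k)) ≤ ENNReal.ofReal (C * Real.exp (-(k * (a + ε)))))
    (n : ℕ) :
    ∃ A R : Ω → ℝ≥0∞, Measurable A ∧ Measurable R ∧
      (∀ ω, ENNReal.ofReal (cascadeZ X ν n ω) ≤ A ω + R ω) ∧
      ∫⁻ ω, A ω * A ω ∂P ≤ ∑' k : ℕ, ENNReal.ofReal (M * C * Real.exp (-(k * ε))) ∧
      ∫⁻ ω, R ω ∂P ≤ Measure.infinitePi (fun _ : ℕ => sbLaw P X₀)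
        {x | ∃ k : ℕ, M * Real.exp (k * a) < ∏ i ∈ Finset.range k, x i} + ν Eᶜ := by
  set δ := Measure.infinitePi (fun _ : ℕ => sbLaw P X₀)
        {x | ∃ k : ℕ, M * Real.exp (k * a) < ∏ i ∈ Finset.range k, x i} with hδ
  set Y : (Fin n → Fin b) → Ω → ℝ≥0∞ := fun u ω => ENNReal.ofReal (cascadeY X (List.ofFn u) ω)
    with hY
  set g : (Fin n → Fin b) → Ω → ℝ≥0∞ := fun u => (goodSet X M a (List.ofFn u)).indicator 1 with hg
  set g' : (Fin n → Fin b) → Ω → ℝ≥0∞ := fun u => (goodSet X M a (List.ofFn u))ᶜ.indicator 1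
    with hg'
  have hYm : ∀ u, Measurable (Y u) := fun u =>
    ENNReal.measurable_ofReal.comp (measurable_cascadeY hM1 _)
  have hgm : ∀ u, Measurable (g u) := fun u =>
    measurable_one.indicator (measurableSet_goodSet hM1 _ _ _)
  have hgm' : ∀ u, Measurable (g' u) := fun u =>
    measurable_one.indicator (measurableSet_goodSet hM1 _ _ _).compl
  set p : (Fin n → Fin b) → ℝ≥0∞ := fun u => ν (E ∩ cylinder (List.ofFn u)) with hp
  set q : (Fin n → Fin b) → ℝ≥0∞ := fun u => ν (Eᶜ ∩ cylinder (List.ofFn u)) with hq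
  have hYint : ∀ u, ∫⁻ ω, Y u ω ∂P = 1 := fun u => by
    simp_rw [hY, cascadeY_ofReal hM1]
    exact lintegral_prod_X hM1 _ (nil_notMem_pre _)
  have hpsum : ∑ u, p u ≤ 1 := (sum_cyl_le ν E univ hEm _ (fun _ _ => subset_univ _)).trans (by simp)
  have hqsum : ∑ u, q u ≤ ν Eᶜ :=
    sum_cyl_le ν Eᶜ Eᶜ hEm.compl _ (fun _ _ => inter_subset_left)
  refine ⟨fun ω => ∑ u, Y u ω * g u ω * p u,
    fun ω => (∑ u, Y u ω * g' u ω * p u) + ∑ u, Y u ω * q u,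
    by fun_prop, by fun_prop, ?_, ?_, ?_⟩
  · intro ω
    rw [cascadeZ, ENNReal.ofReal_sum_of_nonneg
      (fun u _ => mul_nonneg (cascadeY_nonneg hM1 _ _) ENNReal.toReal_nonneg)]
    rw [← add_assoc, ← Finset.sum_add_distrib, ← Finset.sum_add_distrib]
    refine Finset.sum_le_sum fun u _ => ?_
    rw [ENNReal.ofReal_mul (cascadeY_nonneg hM1 _ _), ENNReal.ofReal_toReal (measure_ne_top _ _)]
    have hgg : g u ω + g' u ω = 1 := by
      by_cases h : ω ∈ goodSet X M a (List.ofFn u) <;> simp [hg, hg', h]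
    have hpq : ν (cylinder (List.ofFn u)) = p u + q u := by
      rw [hp, hq]
      simp only
      rw [inter_comm E, inter_comm Eᶜ, ← diff_eq]
      exact (measure_inter_add_diff _ hEm).symm
    calc _ = Y u ω * (g u ω + g' u ω) * p u + Y u ω * q u := by
          rw [hgg, hpq, mul_one, mul_add]
      _ = _ := by ring
      _ ≤ _ := le_rfl
  · have h1 : ∀ ω, (∑ u, Y u ω * g u ω * p u) * (∑ u, Y u ω * g u ω * p u) =
        ∑ u, ∑ v, ((Y u ω * g u ω) * (Y v ω * g v ω)) * (p u * p v) := by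
      intro ω
      rw [Finset.sum_mul_sum]
      refine Finset.sum_congr rfl fun u _ => Finset.sum_congr rfl fun v _ => by ring
    simp_rw [h1]
    rw [lintegral_finsetSum _ (fun u _ => by fun_prop)]
    calc _ ≤ ∑ u, p u * ∑' k : ℕ, ENNReal.ofReal (M * C * Real.exp (-(k * ε))) := ?_
      _ ≤ _ := by
          rw [← Finset.sum_mul]
          exact (mul_le_mul_left hpsum _).trans (by simp)
    refine Finset.sum_le_sum fun u _ => ?_
    rw [lintegral_finsetSum _ (fun u _ => by fun_prop)]
    by_cases hpu : p u = 0
    · simp [hpu]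
    obtain ⟨x, hxE, hxu⟩ : (E ∩ cylinder (List.ofFn u)).Nonempty := by
      by_contra hne
      rw [not_nonempty_iff_eq_empty] at hne
      exact hpu (by simp [hp, hne])
    calc _ ≤ ∑ v, (∑ k ∈ Finset.range (n + 1),
          if (List.ofFn u).take k = (List.ofFn v).take k then
            ENNReal.ofReal (M * Real.exp (k * a)) else 0) * (p u * p v) := by
          refine Finset.sum_le_sum fun v _ => ?_
          rw [lintegral_mul_const _ (by fun_prop)]
          gcongr
          have := second_moment hM1 M a (List.ofFn u) (List.ofFn v) (by simp)
          simpa using this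
      _ = p u * ∑ k ∈ Finset.range (n + 1), ENNReal.ofReal (M * Real.exp (k * a)) *
            ∑ v with (List.ofFn u).take k = (List.ofFn v).take k, p v := by
          simp_rw [Finset.mul_sum, Finset.sum_mul, Finset.sum_filter]
          rw [Finset.sum_comm]
          refine Finset.sum_congr rfl fun k _ => ?_
          refine Finset.sum_congr rfl fun v _ => ?_
          split_ifs
          · ring
          · simp
      _ ≤ p u * ∑ k ∈ Finset.range (n + 1), ENNReal.ofReal (M * C * Real.exp (-(k * ε))) := by
          gcongr with k hk
          have hk := Finset.mem_range.1 hk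
          calc _ ≤ ENNReal.ofReal (M * Real.exp (k * a)) *
                ENNReal.ofReal (C * Real.exp (-(k * (a + ε)))) := by
                gcongr
                refine le_trans ?_ (hE x hxE k)
                refine sum_cyl_le ν E _ hEm _ fun v hv y hy => ?_
                have hv := (Finset.mem_filter.1 hv).2
                rw [wordPrefix_eq hxu (by simp; omega), hv,
                  ← wordPrefix_eq hy.2 (by simp; omega)]
                exact mem_cylinder_wordPrefix y k
            _ = _ := by
                rw [← ENNReal.ofReal_mul (by positivity)]
                congr 1
                rw [show M * Real.exp (k * a) * (C * Real.exp (-(k * (a + ε)))) =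
                  M * C * (Real.exp (k * a) * Real.exp (-(k * (a + ε)))) by ring, ← Real.exp_add]
                ring_nf
      _ ≤ _ := by gcongr; exact ENNReal.sum_le_tsum _
  · rw [lintegral_add_left (by fun_prop), lintegral_finsetSum _ (fun u _ => by fun_prop),
      lintegral_finsetSum _ (fun u _ => by fun_prop)]
    gcongr
    · calc _ ≤ ∑ u, δ * p u := by
            refine Finset.sum_le_sum fun u _ => ?_
            rw [lintegral_mul_const _ (by fun_prop)]
            gcongr
            exact first_moment hM1 M a (List.ofFn u)
        _ ≤ _ := by
          rw [← Finset.mul_sum]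
          exact (mul_le_mul_right hpsum _).trans (by simp)
    · refine le_trans (le_of_eq ?_) hqsum
      refine Finset.sum_congr rfl fun u _ => ?_
      rw [lintegral_mul_const _ (hYm u), hYint, one_mul]

end cascade2

section cascade3
variable {b : ℕ} {Ω : Type*} [MeasurableSpace Ω] {P : Measure Ω} [IsProbabilityMeasure P]
  {X : List (Fin b) → Ω → ℝ} {X₀ : Ω → ℝ}

theorem log_sbLaw (hM1 : CascadeM1 P X X₀) (hfin : entropyX P X₀ ≠ ∞) :
    Integrable Real.log (sbLaw P X₀) ∧
      ∫ x, Real.log x ∂(sbLaw P X₀) ≤ (entropyX P X₀).toReal := by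
  set f : Ω → ℝ := fun ω => X₀ ω * Real.log (X₀ ω) with hf
  have hfm : Measurable f := hM1.meas₀.mul (Real.measurable_log.comp hM1.meas₀)
  have hneg : ∀ ω, -(f ω) ≤ 1 := by
    intro ω
    rcases (hM1.nonneg₀ ω).eq_or_lt with h0 | h0
    · simp [hf, ← h0]
    · have h1 := Real.one_sub_inv_le_log_of_pos h0
      have h2 := mul_le_mul_of_nonneg_left h1 h0.le
      rw [mul_sub, mul_inv_cancel₀ h0.ne'] at h2
      simp only [hf]; linarith
  have hN : ∫⁻ ω, ENNReal.ofReal (-(f ω)) ∂P ≠ ∞ := by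
    refine ne_top_of_le_ne_top ENNReal.one_ne_top ?_
    calc _ ≤ ∫⁻ _, 1 ∂P := lintegral_mono fun ω => by
            rw [← ENNReal.ofReal_one]; exact ENNReal.ofReal_le_ofReal (hneg ω)
      _ = 1 := by simp
  have hPos : ∫⁻ ω, ENNReal.ofReal (f ω) ∂P ≠ ∞ := by
    intro h
    apply hfin
    change (∫⁻ ω, ENNReal.ofReal (f ω) ∂P) - (∫⁻ ω, ENNReal.ofReal (-(f ω)) ∂P) = ∞
    rw [h, ENNReal.top_sub hN]
  have hfi : Integrable f P := by
    refine ⟨hfm.aestronglyMeasurable, ?_⟩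
    rw [hasFiniteIntegral_iff_enorm]
    calc ∫⁻ ω, ‖f ω‖ₑ ∂P ≤ ∫⁻ ω, ENNReal.ofReal (f ω) + ENNReal.ofReal (-(f ω)) ∂P := by
          refine lintegral_mono fun ω => ?_
          rcases le_total 0 (f ω) with h | h
          · rw [Real.enorm_eq_ofReal h]; exact le_self_add
          · rw [← enorm_neg, Real.enorm_eq_ofReal (by linarith)]; exact le_add_self
      _ = _ := lintegral_add_left (by fun_prop) _
      _ < ∞ := ENNReal.add_lt_top.2 ⟨hPos.lt_top, hN.lt_top⟩
  have hfe : ∀ ω, (ENNReal.ofReal (X₀ ω)).toReal • Real.log (X₀ ω) = f ω := fun ω => by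
    rw [ENNReal.toReal_ofReal (hM1.nonneg₀ ω), smul_eq_mul]
  have hgm : Measurable fun x : ℝ => (ENNReal.ofReal x).toReal • Real.log x :=
    (ENNReal.measurable_ofReal.ennreal_toReal).smul Real.measurable_log
  constructor
  · rw [sbLaw, integrable_withDensity_iff_integrable_smul' ENNReal.measurable_ofReal
      (ae_of_all _ fun _ => ENNReal.ofReal_lt_top),
      integrable_map_measure hgm.aestronglyMeasurable hM1.meas₀.aemeasurable]
    exact hfi.congr (ae_of_all _ fun ω => (hfe ω).symm)
  · rw [sbLaw, integral_withDensity_eq_integral_toReal_smul ENNReal.measurable_ofReal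
      (ae_of_all _ fun _ => ENNReal.ofReal_lt_top),
      integral_map hM1.meas₀.aemeasurable hgm.aestronglyMeasurable]
    simp_rw [hfe]
    rw [integral_eq_lintegral_pos_part_sub_lintegral_neg_part hfi]
    exact ENNReal.le_toReal_sub hN

/-- Points where cylinders have uniformly exponentially small mass. -/
def expSet (ν : Measure (SymbSpace b)) (h : ℝ) (j : ℕ) : Set (SymbSpace b) :=
  {x | ∀ k : ℕ, ν (cylinder (wordPrefix x k)) ≤
    ENNReal.ofReal (((j : ℝ) + 1) * Real.exp (-(k * (h + 1 / ((j : ℝ) + 1) + 1 / ((j : ℝ) + 1)))))}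

theorem measurableSet_expSet (ν : Measure (SymbSpace b)) (h : ℝ) (j : ℕ) :
    MeasurableSet (expSet ν h j) := by
  rw [expSet, setOf_forall]
  refine MeasurableSet.iInter fun k => measurableSet_le ?_ measurable_const
  have h1 : Measurable fun u : Fin k → Fin b => ν (cylinder (List.ofFn u)) := Measurable.of_discrete
  exact h1.comp (g := fun u : Fin k → Fin b => ν (cylinder (List.ofFn u)))
    (f := fun (x : SymbSpace b) (i : Fin k) => x i) (by fun_prop)

theorem monotone_expSet (ν : Measure (SymbSpace b)) (h : ℝ) : Monotone (expSet ν h) := by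
  intro i j hij x hx k
  refine (hx k).trans (ENNReal.ofReal_le_ofReal ?_)
  have : (i : ℝ) ≤ j := by exact_mod_cast hij
  gcongr

theorem mem_expSet (ν : Measure (SymbSpace b)) [IsProbabilityMeasure ν] (h : ℝ≥0∞) (hh : h ≠ ∞)
    (x : SymbSpace b) (hx : h < lowerLocalDim ν x) : ∃ j, x ∈ expSet ν h.toReal j := by
  obtain ⟨r, hr1, hr2⟩ := ENNReal.lt_iff_exists_nnreal_btwn.1 hx
  have hr1' : h.toReal < r := by
    have := (ENNReal.toReal_lt_toReal hh ENNReal.coe_ne_top).2 hr1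
    simpa using this
  have hev := eventually_lt_of_lt_liminf hr2
  obtain ⟨N, hN⟩ := eventually_atTop.1 (hev.and (eventually_gt_atTop 0))
  have hr0 : (0 : ℝ) ≤ r := r.2
  have hbound : ∀ k : ℕ, (ν (cylinder (wordPrefix x k))).toReal ≤
      Real.exp (N * r) * Real.exp (-(k * r)) := by
    intro k
    by_cases hk : N ≤ k
    · obtain ⟨h1, h2⟩ := hN k hk
      have h3 : (r : ℝ) < -Real.log ((ν (cylinder (wordPrefix x k))).toReal) / k := by
        rw [← ENNReal.ofReal_coe_nnreal] at h1
        exact (ENNReal.ofReal_lt_ofReal_iff'.1 h1).1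
      rw [lt_div_iff₀ (by exact_mod_cast h2)] at h3
      have h4 : (ν (cylinder (wordPrefix x k))).toReal ≤ Real.exp (-(k * r)) := by
        rcases (ENNReal.toReal_nonneg (a := ν (cylinder (wordPrefix x k)))).eq_or_lt with h0 | h0
        · rw [← h0]; positivity
        · rw [← Real.log_le_iff_le_exp h0]; linarith
      refine h4.trans ?_
      have : 1 ≤ Real.exp (N * r) := Real.one_le_exp (by positivity)
      nlinarith [Real.exp_pos (-(k * r : ℝ))]
    · push Not at hk
      have h1 : (ν (cylinder (wordPrefix x k))).toReal ≤ 1 := by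
        have := ENNReal.toReal_mono ENNReal.one_ne_top (prob_le_one (μ := ν)
          (s := cylinder (wordPrefix x k)))
        simpa using this
      refine h1.trans ?_
      rw [← Real.exp_add]
      refine Real.one_le_exp ?_
      have : (k : ℝ) ≤ N := by exact_mod_cast hk.le
      nlinarith
  obtain ⟨j1, hj1⟩ := exists_nat_ge (Real.exp (N * r))
  obtain ⟨j2, hj2⟩ := exists_nat_ge (2 / (r - h.toReal))
  refine ⟨max j1 j2, fun k => ?_⟩
  rw [← ENNReal.ofReal_toReal (measure_ne_top ν (cylinder (wordPrefix x k)))]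
  refine ENNReal.ofReal_le_ofReal ((hbound k).trans ?_)
  set j := max j1 j2
  have e1 : (j1 : ℝ) ≤ j := by exact_mod_cast le_max_left _ _
  have e2 : (j2 : ℝ) ≤ j := by exact_mod_cast le_max_right _ _
  have hpos : 0 < (j : ℝ) + 1 := by positivity
  have h5 : h.toReal + 1 / ((j : ℝ) + 1) + 1 / ((j : ℝ) + 1) ≤ r := by
    have : 2 / ((j : ℝ) + 1) ≤ r - h.toReal := by
      rw [div_le_comm₀ hpos (by linarith)]; linarith
    have e : 1 / ((j : ℝ) + 1) + 1 / ((j : ℝ) + 1) = 2 / ((j : ℝ) + 1) := by ring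
    linarith
  gcongr
  linarith

theorem regular_aux (hM1 : CascadeM1 P X X₀)
    (ν : Measure (SymbSpace b)) [IsProbabilityMeasure ν]
    (H : ∀ᵐ x ∂ν, entropyX P X₀ < lowerLocalDim ν x) :
    UniformIntegrable (fun n ω => cascadeZ X ν n ω) 1 P := by
  have hfin : entropyX P X₀ ≠ ∞ := by
    obtain ⟨x, hx⟩ := H.exists
    exact hx.ne_top
  set h := (entropyX P X₀).toReal with hh
  obtain ⟨hint, hmean⟩ := log_sbLaw hM1 hfin
  have := isProb_sbLaw hM1
  refine unifInt_aux _ ?_ ?_ ?_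
  · intro n
    unfold cascadeZ
    exact Finset.measurable_sum _ fun u _ => (measurable_cascadeY hM1 _).mul_const _
  · intro n ω
    exact Finset.sum_nonneg fun u _ => mul_nonneg (cascadeY_nonneg hM1 _ _) ENNReal.toReal_nonneg
  intro ε hε
  have hε2 : 0 < ε / 2 := ENNReal.half_pos hε.ne'
  have hzero : ν (⋂ j, (expSet ν h j)ᶜ) = 0 := by
    rw [measure_eq_zero_iff_ae_notMem]
    filter_upwards [H] with x hx hmem
    obtain ⟨j, hj⟩ := mem_expSet ν _ hfin x hx
    exact mem_iInter.1 hmem j hj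
  have htend := tendsto_measure_iInter_atTop (μ := ν) (s := fun j => (expSet ν h j)ᶜ)
    (fun j => (measurableSet_expSet ν h j).compl.nullMeasurableSet)
    (fun i j hij => compl_subset_compl.2 (monotone_expSet ν h hij)) ⟨0, measure_ne_top _ _⟩
  rw [hzero] at htend
  obtain ⟨j, hj⟩ := (htend.eventually (ge_mem_nhds hε2)).exists
  have hη : 0 < 1 / ((j : ℝ) + 1) := by positivity
  obtain ⟨M, hM, hMle⟩ := slln_aux (sbLaw P X₀) hint (h + 1 / ((j : ℝ) + 1)) (by linarith) _ hε2
  refine ⟨∑' k : ℕ, ENNReal.ofReal (M * ((j : ℝ) + 1) * Real.exp (-(k * (1 / ((j : ℝ) + 1))))),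
    ?_, fun n => ?_⟩
  · have hs : Summable fun k : ℕ => M * ((j : ℝ) + 1) * Real.exp (-(k * (1 / ((j : ℝ) + 1)))) := by
      refine Summable.mul_left _ ?_
      have := Real.summable_exp_nat_mul_iff.2 (neg_lt_zero.2 hη)
      refine this.congr fun k => ?_
      congr 1; ring
    rw [← ENNReal.ofReal_tsum_of_nonneg (fun k => by positivity) hs]
    exact ENNReal.ofReal_ne_top
  · obtain ⟨A, R, hA, hR, hle, h2, h1⟩ := decomp hM1 ν M (h + 1 / ((j : ℝ) + 1))
      (1 / ((j : ℝ) + 1)) ((j : ℝ) + 1) hM.le (expSet ν h j) (measurableSet_expSet ν h j)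
      (fun x hx => hx) n
    refine ⟨A, R, hA, hR, hle, h2, h1.trans ?_⟩
    calc _ ≤ ε / 2 + ε / 2 := add_le_add hMle hj
      _ = ε := ENNReal.add_halves ε

end cascade3

/-- **Theorem (sufficient condition for `Q`-regularity).** Let `Q` be a Mandelbrot
multiplicative cascade (assumption (M1)) acting on a Borel probability measure `ν` on the
symbolic space `Σ`. If for `ν`-almost every `x` the lower local dimension of `ν` at `x` is
strictly greater than `h_X`, then `ν` is `Q`-regular, i.e. the martingale `(Z_n)` is
uniformly integrable. In particular this holds if the lower Hausdorff dimension of `ν` is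
strictly greater than `h_X`. -/
theorem regular_of_lowerLocalDim_gt_entropy
    {b : ℕ} (hb : 2 ≤ b)
    {Ω : Type*} [MeasurableSpace Ω] (P : Measure Ω) [IsProbabilityMeasure P]
    (X : List (Fin b) → Ω → ℝ) (X₀ : Ω → ℝ)
    (hM1 : CascadeM1 P X X₀)
    (ν : Measure (SymbSpace b)) [IsProbabilityMeasure ν] :
    ((∀ᵐ x ∂ν, entropyX P X₀ < lowerLocalDim ν x) →
      UniformIntegrable (fun n ω => cascadeZ X ν n ω) 1 P) ∧
    (entropyX P X₀ < lowerHausdorffDim ν →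
      UniformIntegrable (fun n ω => cascadeZ X ν n ω) 1 P) := by
  have h1 : (∀ᵐ x ∂ν, entropyX P X₀ < lowerLocalDim ν x) →
      UniformIntegrable (fun n ω => cascadeZ X ν n ω) 1 P := fun H => regular_aux hM1 ν H
  exact ⟨h1, fun H => h1 (ae_lt_of_lt_essInf H)⟩

end
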